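/- If β > 0 and ρ ∈ (0,1) satisfy 1 − ρ = e^{−βρ}, then β(1 − ρ) < 1. -/

import Mathlib

/-- If `β > 0` and `ρ ∈ (0,1)` satisfy `1 − ρ = e^{−βρ}`, then
`β(1 − ρ) < 1`. -/
theorem beta_one_sub_rho_lt_one (β ρ : ℝ) (hβ : 0 < β) (hρ : ρ ∈ Set.Ioo (0 : ℝ) 1)
    (hfix : 1 - ρ = Real.exp (-(β * ρ))) : β * (1 - ρ) < 1 := by
  obtain ⟨h0, h1⟩ := hρ
  have hx : 0 < β * ρ := mul_pos hβ h0
  have he : β * ρ + 1 < Real.exp (β * ρ) := Real.add_one_lt_exp hx.ne'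
  have hm : (1 - ρ) * Real.exp (β * ρ) = 1 := by
    rw [hfix, ← Real.exp_add]; simp
  have h2 : (1 - ρ) * (β * ρ + 1) < 1 := by
    have h4 : 0 < 1 - ρ := by linarith
    exact (mul_lt_mul_of_pos_left he h4).trans_eq hm
  have h3 : ρ * (β * (1 - ρ)) < ρ * 1 := by linarith
  exact lt_of_mul_lt_mul_left h3 h0.le
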